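/- Under the two-set greedy algorithm, if d_n(F) ≤ C₀ n^{−α} for all n = 1, 2, … for some constants C₀ > 0 and α > 0, then σ_n(F̃) ≤ C₁ n^{−α} for all n ≥ 1, where C₁ := 2^{5α+1} C₀. -/

import Mathlib

/-!
Gram–Schmidt turns the greedy errors `σ_N, …, σ_{N+K-1}` into the diagonal entries of a triangular
matrix. Their product is therefore the determinant of the projections of the `f_{N+i}` to the span
`E` of the corresponding orthonormal vectors, written in that basis. These projections have norm at
most `σ_N`, since `E` is orthogonal to `V_N`, and lie within `d_m` (up to `ε`) of a subspace `W`
with `dim W ≤ m`. Multiplying `W` by `d_m` and `Wᗮ` by `σ_N` makes each of them at most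
`√2 * d_m * σ_N` long, so Hadamard's inequality yields
`σ_N ⋯ σ_{N+K-1} ≤ √2 ^ K * σ_N ^ m * d_m ^ (K - m)`. For `K = 2m` this gives
`σ_{N+2m}² ≤ 2 σ_N d_m`, and with `N = 2m` the decay rate propagates along the powers of two.
-/

open Metric Module Submodule InnerProductSpace

section Distance

lemma infDist_image_le_of_lipschitzWith_one {X Z : Type*} [PseudoMetricSpace X]
    [PseudoMetricSpace Z] {A : X → Z} (hA : LipschitzWith 1 A) {S : Set X} (hS : S.Nonempty)
    (x : X) : infDist (A x) (A '' S) ≤ infDist x S :=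
  (le_infDist hS).2 fun y hy =>
    (infDist_le_dist_of_mem (Set.mem_image_of_mem A hy)).trans (by simpa using hA.dist_le_mul x y)

variable {𝕜 H : Type*} [RCLike 𝕜] [NormedAddCommGroup H] [InnerProductSpace 𝕜 H]

lemma infDist_eq_norm_sub_starProjection (U : Submodule 𝕜 H) [U.HasOrthogonalProjection] (x : H) :
    infDist x (U : Set H) = ‖x - U.starProjection x‖ := by
  simp only [infDist_eq_iInf, dist_eq_norm, starProjection_minimal, SetLike.coe_sort_coe]

lemma infDist_eq_norm_starProjection_orthogonal (U : Submodule 𝕜 H) [U.HasOrthogonalProjection]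
    (x : H) : infDist x (U : Set H) = ‖Uᗮ.starProjection x‖ := by
  rw [infDist_eq_norm_sub_starProjection, starProjection_orthogonal_val]

lemma infDist_le_norm (U : Submodule 𝕜 H) (x : H) : infDist x (U : Set H) ≤ ‖x‖ := by
  simpa using infDist_le_dist_of_mem (x := x) U.zero_mem

end Distance

section Determinant

variable {𝕜 E ι : Type*} [RCLike 𝕜] [NormedAddCommGroup E] [InnerProductSpace 𝕜 E]

lemma norm_det_le_prod_norm [Fintype ι] [DecidableEq ι] (b : OrthonormalBasis ι 𝕜 E) (v : ι → E) :
    ‖b.toBasis.det v‖ ≤ ∏ i, ‖v i‖ := by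
  have : FiniteDimensional 𝕜 E := b.toBasis.finiteDimensional_of_finite
  let σ := Fintype.equivFin ι
  let w : Fin (Fintype.card ι) → E := v ∘ σ.symm
  have hcard : finrank 𝕜 E = Fintype.card (Fin (Fintype.card ι)) := by
    simp [finrank_eq_card_basis b.toBasis]
  let g := gramSchmidtOrthonormalBasis hcard w
  have hreindex : b.toBasis.det v = (b.reindex σ).toBasis.det w := by
    rw [OrthonormalBasis.reindex_toBasis, Basis.det_reindex]
    simp [w, Function.comp_assoc]
  have hchange : (b.reindex σ).toBasis.det w = (b.reindex σ).toBasis.det g * g.toBasis.det w := by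
    conv_lhs => rw [AlternatingMap.eq_smul_basis_det g.toBasis (b.reindex σ).toBasis.det]
    simp
  calc ‖b.toBasis.det v‖ = ‖g.toBasis.det w‖ := by
        rw [hreindex, hchange, norm_mul, OrthonormalBasis.det_to_matrix_orthonormalBasis, one_mul]
    _ = ∏ i, ‖inner 𝕜 (g i) (w i)‖ := by rw [gramSchmidtOrthonormalBasis_det, norm_prod]
    _ ≤ ∏ i, ‖w i‖ := Finset.prod_le_prod (fun _ _ => norm_nonneg _) fun i _ => by
        simpa using norm_inner_le_norm (𝕜 := 𝕜) (g i) (w i)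
    _ = ∏ i, ‖v i‖ := Equiv.prod_comp σ.symm fun i => ‖v i‖

section Scaling

variable (W : Submodule 𝕜 E) [W.HasOrthogonalProjection] (a c : 𝕜)

/-- The operator that multiplies `W` by `a` and `Wᗮ` by `c`. -/
noncomputable def orthogonalScaling : E →ₗ[𝕜] E :=
  a • (W.starProjection : E →ₗ[𝕜] E) + c • (Wᗮ.starProjection : E →ₗ[𝕜] E)

lemma orthogonalScaling_apply (x : E) :
    orthogonalScaling W a c x = a • W.starProjection x + c • Wᗮ.starProjection x := rfl

lemma norm_orthogonalScaling_apply_sq (x : E) :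
    ‖orthogonalScaling W a c x‖ ^ 2 =
      (‖a‖ * ‖W.starProjection x‖) ^ 2 + (‖c‖ * ‖Wᗮ.starProjection x‖) ^ 2 := by
  have horth : inner 𝕜 (a • W.starProjection x) (c • Wᗮ.starProjection x) = 0 :=
    inner_right_of_mem_orthogonal (W.smul_mem a (starProjection_apply_mem W x))
      (Wᗮ.smul_mem c (starProjection_apply_mem Wᗮ x))
  simp only [orthogonalScaling_apply, sq, norm_smul,
    norm_add_sq_eq_norm_sq_add_norm_sq_of_inner_eq_zero _ _ horth]

lemma det_orthogonalScaling [FiniteDimensional 𝕜 E] :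
    LinearMap.det (orthogonalScaling W a c) = a ^ finrank 𝕜 W * c ^ finrank 𝕜 Wᗮ := by
  let e := W.prodEquivOfIsCompl Wᗮ W.isCompl_orthogonal
  let D : (W × Wᗮ) →ₗ[𝕜] (W × Wᗮ) := (a • LinearMap.id).prodMap (c • LinearMap.id)
  have hconj : orthogonalScaling W a c = e ∘ₗ D ∘ₗ e.symm := by
    rw [← LinearMap.comp_assoc, LinearEquiv.eq_comp_toLinearMap_symm]
    ext x <;> simp [e, D, orthogonalScaling_apply, (starProjection_apply_eq_zero_iff _).2]
  rw [hconj, LinearMap.det_conj, LinearMap.det_prodMap]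
  simp [LinearMap.det_smul]

end Scaling

section DeterminantBound

variable [Fintype ι] [DecidableEq ι] (b : OrthonormalBasis ι 𝕜 E) {v : ι → E}
  {W : Submodule 𝕜 E} {s d : ℝ}

lemma norm_det_le_sqrt_two_pow_mul_finrank (hs : 0 < s) (hd : 0 < d)
    (hvs : ∀ i, ‖v i‖ ≤ s) (hvd : ∀ i, infDist (v i) (W : Set E) ≤ d) :
    ‖b.toBasis.det v‖ ≤ √2 ^ Fintype.card ι * (s ^ finrank 𝕜 W * d ^ finrank 𝕜 Wᗮ) := by
  have : FiniteDimensional 𝕜 E := b.toBasis.finiteDimensional_of_finite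
  -- Scaling `W` by `d` and `Wᗮ` by `s` makes both components of each `v i` at most `d * s`.
  let T := orthogonalScaling W (d : 𝕜) (s : 𝕜)
  have hT (i : ι) : ‖T (v i)‖ ≤ √2 * (d * s) := by
    have hW : ‖W.starProjection (v i)‖ ≤ s := (W.norm_starProjection_apply_le _).trans (hvs i)
    have hWperp : ‖Wᗮ.starProjection (v i)‖ ≤ d :=
      (infDist_eq_norm_starProjection_orthogonal W (v i)).symm.trans_le (hvd i)
    refine le_of_sq_le_sq ?_ (by positivity)
    calc ‖T (v i)‖ ^ 2
        = (d * ‖W.starProjection (v i)‖) ^ 2 + (s * ‖Wᗮ.starProjection (v i)‖) ^ 2 := by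
          simp [T, norm_orthogonalScaling_apply_sq, abs_of_pos, hs, hd]
      _ ≤ (d * s) ^ 2 + (s * d) ^ 2 := by gcongr
      _ = (√2 * (d * s)) ^ 2 := by rw [mul_pow √2, Real.sq_sqrt zero_le_two]; ring
  have hdetT : ‖LinearMap.det T‖ = d ^ finrank 𝕜 W * s ^ finrank 𝕜 Wᗮ := by
    simp [T, det_orthogonalScaling, abs_of_pos, hs, hd]
  have hcard : Fintype.card ι = finrank 𝕜 W + finrank 𝕜 Wᗮ := by
    rw [finrank_add_finrank_orthogonal, finrank_eq_card_basis b.toBasis]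
  refine le_of_mul_le_mul_left ?_ (show 0 < d ^ finrank 𝕜 W * s ^ finrank 𝕜 Wᗮ by positivity)
  calc d ^ finrank 𝕜 W * s ^ finrank 𝕜 Wᗮ * ‖b.toBasis.det v‖
      = ‖b.toBasis.det (T ∘ v)‖ := by rw [Basis.det_comp, norm_mul, hdetT]
    _ ≤ ∏ i, ‖T (v i)‖ := norm_det_le_prod_norm b _
    _ ≤ ∏ _i : ι, √2 * (d * s) := Finset.prod_le_prod (fun _ _ => norm_nonneg _) fun i _ => hT i
    _ = _ := by rw [Finset.prod_const, Finset.card_univ, hcard]; ring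

lemma norm_det_le_sqrt_two_pow_mul {m k : ℕ} (hcard : Fintype.card ι = m + k)
    (hW : finrank 𝕜 W ≤ m) (hs : 0 < s) (hd : 0 < d)
    (hvs : ∀ i, ‖v i‖ ≤ s) (hvd : ∀ i, infDist (v i) (W : Set E) ≤ d) :
    ‖b.toBasis.det v‖ ≤ √2 ^ (m + k) * (s ^ m * d ^ k) := by
  have : FiniteDimensional 𝕜 E := b.toBasis.finiteDimensional_of_finite
  have hsum : finrank 𝕜 W + finrank 𝕜 Wᗮ = m + k := by
    rw [finrank_add_finrank_orthogonal, finrank_eq_card_basis b.toBasis, hcard]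
  rcases le_total d s with hds | hsd
  · obtain ⟨l, rfl⟩ := Nat.exists_eq_add_of_le hW
    have hperp : finrank 𝕜 Wᗮ = l + k := by omega
    calc ‖b.toBasis.det v‖
        ≤ √2 ^ Fintype.card ι * (s ^ finrank 𝕜 W * d ^ finrank 𝕜 Wᗮ) :=
          norm_det_le_sqrt_two_pow_mul_finrank b hs hd hvs hvd
      _ = √2 ^ (finrank 𝕜 W + l + k) * (s ^ finrank 𝕜 W * (d ^ l * d ^ k)) := by
          rw [hcard, hperp, pow_add d]
      _ ≤ √2 ^ (finrank 𝕜 W + l + k) * (s ^ finrank 𝕜 W * (s ^ l * d ^ k)) := by gcongr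
      _ = _ := by rw [pow_add s, mul_assoc]
  · calc ‖b.toBasis.det v‖ ≤ ∏ i, ‖v i‖ := norm_det_le_prod_norm b v
      _ ≤ ∏ _i : ι, s := Finset.prod_le_prod (fun _ _ => norm_nonneg _) fun i _ => hvs i
      _ = 1 * (s ^ m * s ^ k) := by simp [hcard, pow_add]
      _ ≤ √2 ^ (m + k) * (s ^ m * d ^ k) := by
          gcongr
          exact one_le_pow₀ (Real.one_le_sqrt.2 one_le_two)

end DeterminantBound

end Determinant

section OrthonormalFamily

variable {𝕜 H ι : Type*} [RCLike 𝕜] [NormedAddCommGroup H] [InnerProductSpace 𝕜 H] [Fintype ι]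

lemma exists_orthonormalBasis_span_range {e : ι → H} (he : Orthonormal 𝕜 e) :
    ∃ b : OrthonormalBasis ι 𝕜 (span 𝕜 (Set.range e)), ∀ i, (b i : H) = e i := by
  have hspan : Orthonormal 𝕜 (Basis.span he.linearIndependent) := by
    convert orthonormal_span he
    exact congrArg Subtype.val (Basis.span_apply he.linearIndependent _)
  exact ⟨(Basis.span he.linearIndependent).toOrthonormalBasis hspan,
    fun i => by simp [Basis.span_apply]⟩

lemma infDist_orthogonalProjectionOnto_map_le (E V : Submodule 𝕜 H) [E.HasOrthogonalProjection]
    (x : H) :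
    infDist (E.orthogonalProjectionOnto x)
      (V.map (E.orthogonalProjectionOnto : H →ₗ[𝕜] E) : Set E) ≤ infDist x (V : Set H) :=
  infDist_image_le_of_lipschitzWith_one E.lipschitzWith_orthogonalProjectionOnto V.nonempty x

lemma norm_orthogonalProjectionOnto_le_infDist {E U : Submodule 𝕜 H} [E.HasOrthogonalProjection]
    (hEU : E ⟂ U) (x : H) : ‖E.orthogonalProjectionOnto x‖ ≤ infDist x (U : Set H) := by
  have hmap : U.map (E.orthogonalProjectionOnto : H →ₗ[𝕜] E) = ⊥ :=
    eq_bot_iff.2 <| map_le_iff_le_comap.2 fun u hu =>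
      orthogonalProjectionOnto_apply_of_mem_orthogonal (hEU.symm hu)
  simpa [hmap] using infDist_orthogonalProjectionOnto_map_le E U x

lemma norm_det_inner_le [DecidableEq ι] {e v : ι → H} (he : Orthonormal 𝕜 e) {m k : ℕ}
    (hcard : Fintype.card ι = m + k) {s d : ℝ} (hs : 0 < s) (hd : 0 < d)
    {U Y : Submodule 𝕜 H} (hU : ∀ i, e i ∈ Uᗮ) (hY : Module.rank 𝕜 Y ≤ m)
    (hvU : ∀ i, infDist (v i) (U : Set H) ≤ s) (hvY : ∀ i, infDist (v i) (Y : Set H) ≤ d) :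
    ‖(Matrix.of fun i j => inner 𝕜 (e i) (v j)).det‖ ≤ √2 ^ (m + k) * (s ^ m * d ^ k) := by
  obtain ⟨b, hb⟩ := exists_orthonormalBasis_span_range he
  let E : Submodule 𝕜 H := span 𝕜 (Set.range e)
  have : FiniteDimensional 𝕜 E := b.toBasis.finiteDimensional_of_finite
  have : Module.Finite 𝕜 Y := rank_lt_aleph0_iff.mp (hY.trans_lt Cardinal.natCast_lt_aleph0)
  have hEU : E ⟂ U := span_le.2 (Set.range_subset_iff.2 hU)
  let P : H →L[𝕜] E := E.orthogonalProjectionOnto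
  have hdet : (Matrix.of fun i j => inner 𝕜 (e i) (v j)).det = b.toBasis.det (P ∘ v) := by
    rw [Basis.det_apply]
    congr 1
    ext i j
    rw [Matrix.of_apply, Basis.toMatrix_apply, OrthonormalBasis.coe_toBasis_repr_apply,
      OrthonormalBasis.repr_apply_apply, ← hb]
    exact (inner_orthogonalProjectionOnto_eq_of_mem_left (b i) (v j)).symm
  rw [hdet]
  exact norm_det_le_sqrt_two_pow_mul b hcard
    ((finrank_map_le (P : H →ₗ[𝕜] E) Y).trans (finrank_le_of_rank_le hY)) hs hd
    (fun i => (norm_orthogonalProjectionOnto_le_infDist hEU (v i)).trans (hvU i))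
    fun i => (infDist_orthogonalProjectionOnto_map_le E Y (v i)).trans (hvY i)

end OrthonormalFamily

section GramSchmidt

variable {𝕜 H ι : Type*} [RCLike 𝕜] [NormedAddCommGroup H] [InnerProductSpace 𝕜 H]

variable (𝕜) in
/-- The span `V_n` of the terms of the family `f` that strictly precede the index `n`. -/
abbrev initialSpan [Preorder ι] (f : ι → H) (n : ι) : Submodule 𝕜 H := span 𝕜 (f '' Set.Iio n)

lemma initialSpan_mono [Preorder ι] (f : ι → H) : Monotone (initialSpan 𝕜 f) :=
  fun _ _ hmn => span_mono (Set.image_mono (Set.Iio_subset_Iio hmn))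

variable [LinearOrder ι] [LocallyFiniteOrderBot ι] [WellFoundedLT ι] (f : ι → H)

lemma gramSchmidt_mem_initialSpan_orthogonal {m n : ι} (hmn : m ≤ n) :
    gramSchmidt 𝕜 f n ∈ (initialSpan 𝕜 f m)ᗮ := by
  have hle : initialSpan 𝕜 f m ≤ (𝕜 ∙ gramSchmidt 𝕜 f n)ᗮ := by
    rw [span_le, Set.image_subset_iff]
    exact fun i hi => mem_orthogonal_singleton_iff_inner_right.2
      (gramSchmidt_inv_triangular 𝕜 f (hi.trans_le hmn))
  exact fun u hu => mem_orthogonal_singleton_iff_inner_left.1 (hle hu)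

lemma sub_gramSchmidt_mem_initialSpan (n : ι) : f n - gramSchmidt 𝕜 f n ∈ initialSpan 𝕜 f n := by
  rw [gramSchmidt_def, sub_sub_cancel, initialSpan, ← span_gramSchmidt_Iio]
  refine sum_mem fun i hi => ?_
  have hle : 𝕜 ∙ gramSchmidt 𝕜 f i ≤ span 𝕜 (gramSchmidt 𝕜 f '' Set.Iio n) :=
    (span_singleton_le_iff_mem _ _).2
      (subset_span (Set.mem_image_of_mem _ (Finset.mem_Iio.1 hi)))
  exact hle (starProjection_apply_mem _ _)

lemma infDist_initialSpan_eq_norm_gramSchmidt (n : ι) :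
    infDist (f n) (initialSpan 𝕜 f n : Set H) = ‖gramSchmidt 𝕜 f n‖ := by
  have : FiniteDimensional 𝕜 (initialSpan 𝕜 f n) :=
    FiniteDimensional.span_of_finite 𝕜 ((Set.finite_Iio n).image f)
  rw [infDist_eq_norm_sub_starProjection,
    eq_starProjection_of_mem_orthogonal (sub_gramSchmidt_mem_initialSpan f n)
      (by simpa using gramSchmidt_mem_initialSpan_orthogonal f le_rfl), sub_sub_cancel]

lemma inner_gramSchmidtNormed_self (n : ι) :
    inner 𝕜 (gramSchmidtNormed 𝕜 f n) (f n) = ‖gramSchmidt 𝕜 f n‖ := by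
  have hsub : inner 𝕜 (gramSchmidt 𝕜 f n) (f n - gramSchmidt 𝕜 f n) = 0 :=
    inner_left_of_mem_orthogonal (sub_gramSchmidt_mem_initialSpan f n)
      (gramSchmidt_mem_initialSpan_orthogonal f le_rfl)
  have hself : inner 𝕜 (gramSchmidt 𝕜 f n) (f n) = (‖gramSchmidt 𝕜 f n‖ : 𝕜) ^ 2 := by
    rw [← inner_self_eq_norm_sq_to_K, ← sub_eq_zero, ← inner_sub_right, hsub]
  rcases eq_or_ne (‖gramSchmidt 𝕜 f n‖ : 𝕜) 0 with h0 | h0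
  · simp [gramSchmidtNormed, h0]
  · simp [gramSchmidtNormed, inner_smul_left, hself, sq, h0]

lemma det_inner_gramSchmidtNormed {κ : Type*} [Fintype κ] [LinearOrder κ] {φ : κ → ι}
    (hφ : StrictMono φ) :
    (Matrix.of fun i j => inner 𝕜 (gramSchmidtNormed 𝕜 f (φ i)) (f (φ j))).det =
      ∏ i, (‖gramSchmidt 𝕜 f (φ i)‖ : 𝕜) := by
  rw [Matrix.det_of_isUpperTriangular]
  · simp only [Matrix.of_apply, inner_gramSchmidtNormed_self]
  · intro i j hji
    have hlt : φ j < φ i := hφ hji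
    simp [gramSchmidtNormed, inner_smul_left, gramSchmidt_inv_triangular 𝕜 f hlt]

lemma orthonormal_gramSchmidtNormed_comp {κ : Type*} {φ : κ → ι} (hφ : Function.Injective φ)
    (hne : ∀ i, gramSchmidt 𝕜 f (φ i) ≠ 0) :
    Orthonormal 𝕜 fun i => gramSchmidtNormed 𝕜 f (φ i) :=
  (gramSchmidtNormed_orthonormal' f).comp
    (fun i => ⟨φ i, by simpa [gramSchmidtNormed] using hne i⟩)
    fun _ _ hij => hφ (congrArg Subtype.val hij)

lemma prod_infDist_initialSpan_le {κ : Type*} [Fintype κ] [LinearOrder κ] {φ : κ → ι}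
    (hφ : StrictMono φ) {N : ι} (hN : ∀ i, N ≤ φ i) {m k : ℕ} (hcard : Fintype.card κ = m + k)
    {s d : ℝ} (hs : 0 < s) (hd : 0 < d)
    (hfs : ∀ i, infDist (f (φ i)) (initialSpan 𝕜 f N : Set H) ≤ s)
    {Y : Submodule 𝕜 H} (hY : Module.rank 𝕜 Y ≤ m)
    (hfd : ∀ i, infDist (f (φ i)) (Y : Set H) ≤ d) :
    ∏ i, infDist (f (φ i)) (initialSpan 𝕜 f (φ i) : Set H) ≤ √2 ^ (m + k) * (s ^ m * d ^ k) := by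
  simp only [infDist_initialSpan_eq_norm_gramSchmidt]
  by_cases hne : ∀ i, gramSchmidt 𝕜 f (φ i) ≠ 0
  · calc ∏ i, ‖gramSchmidt 𝕜 f (φ i)‖
        = ‖(Matrix.of fun i j => inner 𝕜 (gramSchmidtNormed 𝕜 f (φ i)) (f (φ j))).det‖ := by
          simp [det_inner_gramSchmidtNormed f hφ]
      _ ≤ √2 ^ (m + k) * (s ^ m * d ^ k) :=
          norm_det_inner_le (orthonormal_gramSchmidtNormed_comp f hφ.injective hne) hcard hs hd
            (fun i => smul_mem _ _ (gramSchmidt_mem_initialSpan_orthogonal f (hN i))) hY hfs hfd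
  · obtain ⟨i, hi⟩ := not_forall_not.1 hne
    rw [Finset.prod_eq_zero (Finset.mem_univ i) (by rw [hi, norm_zero])]
    positivity

end GramSchmidt

section Widths

variable {𝕜 H : Type*} [RCLike 𝕜] [NormedAddCommGroup H] [InnerProductSpace 𝕜 H]

/-- The worst error in approximating an element of `S` from `V`; it has the junk value `0` when
these errors are unbounded. -/
noncomputable def deviation (S : Set H) (V : Submodule 𝕜 H) : ℝ :=
  ⨆ g : S, infDist (g : H) (V : Set H)

variable (𝕜) in
/-- The Kolmogorov width `d_n(F)`. -/
noncomputable def kolmogorovWidth (F : Set H) (n : ℕ) : ℝ :=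
  ⨅ Y : {Y : Submodule 𝕜 H // Module.rank 𝕜 Y ≤ n}, deviation F Y.1

variable (𝕜) in
/-- The error `σ_n(S)` of approximating `S` from the span `V_n` of the first `n` terms of `f`. -/
noncomputable def greedyError (S : Set H) (f : ℕ → H) (n : ℕ) : ℝ :=
  deviation S (initialSpan 𝕜 f n)

variable (𝕜) in
/-- A possible output of the greedy algorithm on `S`: each `f n` is an element of `S` that is worst
approximated from the span `V_n` of its predecessors. -/
structure IsGreedySequence (S : Set H) (f : ℕ → H) : Prop where
  mem (n : ℕ) : f n ∈ S
  infDist_eq_greedyError (n : ℕ) :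
    infDist (f n) (initialSpan 𝕜 f n : Set H) = greedyError 𝕜 S f n

lemma deviation_nonneg (S : Set H) (V : Submodule 𝕜 H) : 0 ≤ deviation S V :=
  Real.iSup_nonneg fun _ => infDist_nonneg

lemma kolmogorovWidth_nonneg (F : Set H) (n : ℕ) : 0 ≤ kolmogorovWidth 𝕜 F n :=
  Real.iInf_nonneg fun _ => deviation_nonneg _ _

lemma exists_rank_le_deviation_lt {F : Set H} {n : ℕ} {d : ℝ} (hd : kolmogorovWidth 𝕜 F n < d) :
    ∃ Y : Submodule 𝕜 H, Module.rank 𝕜 Y ≤ n ∧ deviation F Y < d := by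
  have : Nonempty {Y : Submodule 𝕜 H // Module.rank 𝕜 Y ≤ n} := ⟨⟨⊥, by simp⟩⟩
  obtain ⟨⟨Y, hY⟩, hlt⟩ := exists_lt_of_ciInf_lt hd
  exact ⟨Y, hY, hlt⟩

section Bounded

variable {S : Set H} (hS : Bornology.IsBounded S)

include hS

lemma bddAbove_range_infDist (V : Submodule 𝕜 H) :
    BddAbove (Set.range fun g : S => infDist (g : H) (V : Set H)) := by
  obtain ⟨R, hR⟩ := hS.exists_norm_le
  exact ⟨R, Set.forall_mem_range.2 fun g => (infDist_le_norm V g).trans (hR g g.2)⟩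

lemma infDist_le_deviation (V : Submodule 𝕜 H) {g : H} (hg : g ∈ S) :
    infDist g (V : Set H) ≤ deviation S V :=
  le_ciSup (bddAbove_range_infDist hS V) ⟨g, hg⟩

lemma deviation_anti : Antitone (deviation S : Submodule 𝕜 H → ℝ) := fun V _ hVW =>
  ciSup_mono (bddAbove_range_infDist hS V) fun _ => infDist_le_infDist_of_subset hVW V.nonempty

lemma greedyError_antitone (f : ℕ → H) : Antitone (greedyError 𝕜 S f) :=
  (deviation_anti hS).comp_monotone (initialSpan_mono f)

end Bounded

section Greedy

variable {F S : Set H} {f : ℕ → H} (hF : Bornology.IsBounded F) (hSF : S ⊆ F)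
  (hf : IsGreedySequence 𝕜 S f)

include hF hSF hf

lemma prod_greedyError_le (N m k : ℕ) :
    ∏ i : Fin (m + k), greedyError 𝕜 S f (N + i) ≤
      √2 ^ (m + k) * (greedyError 𝕜 S f N ^ m * kolmogorovWidth 𝕜 F m ^ k) := by
  set s := greedyError 𝕜 S f N
  set d := kolmogorovWidth 𝕜 F m
  -- The infimum defining `d` need not be attained.
  have hε (ε : ℝ) (hpos : 0 < ε) : ∏ i : Fin (m + k), greedyError 𝕜 S f (N + i) ≤
      √2 ^ (m + k) * ((s + ε) ^ m * (d + ε) ^ k) := by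
    obtain ⟨Y, hY, hYd⟩ := exists_rank_le_deviation_lt (lt_add_of_pos_right d hpos)
    simp only [← hf.infDist_eq_greedyError]
    exact prod_infDist_initialSpan_le f (φ := fun i : Fin (m + k) => N + i)
      (Fin.val_strictMono.const_add N) (fun i => Nat.le_add_right N i) (Fintype.card_fin _)
      (add_pos_of_nonneg_of_pos (deviation_nonneg _ _) hpos)
      (add_pos_of_nonneg_of_pos (kolmogorovWidth_nonneg F m) hpos)
      (fun i => (infDist_le_deviation (hF.subset hSF) _ (hf.mem _)).trans
        (le_add_of_nonneg_right hpos.le))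
      hY fun i => (infDist_le_deviation hF Y (hSF (hf.mem _))).trans hYd.le
  have hcont : Continuous fun ε : ℝ => √2 ^ (m + k) * ((s + ε) ^ m * (d + ε) ^ k) := by fun_prop
  have hlim : Filter.Tendsto (fun ε : ℝ => √2 ^ (m + k) * ((s + ε) ^ m * (d + ε) ^ k))
      (nhdsWithin 0 (Set.Ioi 0)) (nhds (√2 ^ (m + k) * (s ^ m * d ^ k))) :=
    (hcont.tendsto' 0 _ (by simp)).mono_left nhdsWithin_le_nhds
  exact ge_of_tendsto hlim (Filter.eventually_of_mem self_mem_nhdsWithin hε)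

lemma greedyError_add_two_mul_sq_le (N : ℕ) {m : ℕ} (hm : m ≠ 0) :
    greedyError 𝕜 S f (N + 2 * m) ^ 2 ≤ 2 * greedyError 𝕜 S f N * kolmogorovWidth 𝕜 F m := by
  have hs (n : ℕ) : 0 ≤ greedyError 𝕜 S f n := deviation_nonneg _ _
  have hd : 0 ≤ kolmogorovWidth 𝕜 F m := kolmogorovWidth_nonneg F m
  have hanti : Antitone (greedyError 𝕜 S f) := greedyError_antitone (hF.subset hSF) f
  refine (pow_le_pow_iff_left₀ (sq_nonneg _)
    (mul_nonneg (mul_nonneg zero_le_two (hs N)) hd) hm).1 ?_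
  calc (greedyError 𝕜 S f (N + 2 * m) ^ 2) ^ m
      = ∏ _i : Fin (m + m), greedyError 𝕜 S f (N + 2 * m) := by simp [← pow_mul, two_mul]
    _ ≤ ∏ i : Fin (m + m), greedyError 𝕜 S f (N + i) :=
        Finset.prod_le_prod (fun _ _ => hs _) fun i _ => hanti (by omega)
    _ ≤ √2 ^ (m + m) * (greedyError 𝕜 S f N ^ m * kolmogorovWidth 𝕜 F m ^ m) :=
        prod_greedyError_le hF hSF hf N m m
    _ = (2 * greedyError 𝕜 S f N * kolmogorovWidth 𝕜 F m) ^ m := by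
        rw [← two_mul, pow_mul, Real.sq_sqrt zero_le_two, mul_pow, mul_pow, mul_assoc]

lemma greedyError_one_le : greedyError 𝕜 S f 1 ≤ 2 * kolmogorovWidth 𝕜 F 1 := by
  have hprod : greedyError 𝕜 S f 0 * greedyError 𝕜 S f 1 ≤
      greedyError 𝕜 S f 0 * (2 * kolmogorovWidth 𝕜 F 1) := by
    simpa [Fin.prod_univ_two, mul_left_comm] using prod_greedyError_le hF hSF hf 0 1 1
  have hs : 0 ≤ greedyError 𝕜 S f 0 := deviation_nonneg _ _
  rcases hs.eq_or_lt with h0 | hpos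
  · calc greedyError 𝕜 S f 1
        ≤ greedyError 𝕜 S f 0 := greedyError_antitone (hF.subset hSF) f zero_le_one
      _ = 0 := h0.symm
      _ ≤ 2 * kolmogorovWidth 𝕜 F 1 := mul_nonneg zero_le_two (kolmogorovWidth_nonneg F 1)
  · exact le_of_mul_le_mul_left hprod hpos

end Greedy

end Widths

section Recursion

variable {S : ℕ → ℝ} {C : ℝ}

lemma apply_two_pow_le_of_sq_le {q : ℝ} (hq : 1 ≤ q) (hS : ∀ n, 0 ≤ S n) (hanti : Antitone S)
    (hone : S 1 ≤ 2 * C)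
    (hstep : ∀ k, S (2 ^ (k + 2)) ^ 2 ≤ 2 * S (2 ^ (k + 1)) * (C * (q ^ k)⁻¹)) (k : ℕ) :
    S (2 ^ k) ≤ 2 * q ^ 3 * C * (q ^ k)⁻¹ := by
  have hC : 0 ≤ C := by linarith [hS 1]
  induction k using Nat.twoStepInduction with
  | zero =>
    calc S (2 ^ 0) ≤ 1 * (2 * C) := by simpa using hone
      _ ≤ q ^ 3 * (2 * C) := by gcongr; exact one_le_pow₀ hq
      _ = 2 * q ^ 3 * C * (q ^ 0)⁻¹ := by rw [pow_zero, inv_one]; ring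
  | one =>
    calc S (2 ^ 1) ≤ 1 * (2 * C) := by simpa using (hanti one_le_two).trans hone
      _ ≤ q ^ 2 * (2 * C) := by gcongr; exact one_le_pow₀ hq
      _ = 2 * q ^ 3 * C * (q ^ 1)⁻¹ := by field_simp
  | more k _ ih =>
    refine le_of_sq_le_sq ?_ (by positivity)
    calc S (2 ^ (k + 2)) ^ 2 ≤ 2 * S (2 ^ (k + 1)) * (C * (q ^ k)⁻¹) := hstep k
      _ ≤ 2 * (2 * q ^ 3 * C * (q ^ (k + 1))⁻¹) * (C * (q ^ k)⁻¹) := by gcongr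
      _ = (2 * q ^ 3 * C * (q ^ (k + 2))⁻¹) ^ 2 := by field_simp; ring

lemma le_two_rpow_mul_rpow_neg_of_sq_le {α : ℝ} (hα : 0 ≤ α) (hS : ∀ n, 0 ≤ S n)
    (hanti : Antitone S) (hone : S 1 ≤ 2 * C)
    (hstep : ∀ m : ℕ, 1 ≤ m → S (4 * m) ^ 2 ≤ 2 * S (2 * m) * (C * (m : ℝ) ^ (-α)))
    {n : ℕ} (hn : 1 ≤ n) : S n ≤ 2 ^ (5 * α + 1) * C * (n : ℝ) ^ (-α) := by
  have hC : 0 ≤ C := by linarith [hS 1]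
  let q : ℝ := 2 ^ α
  have hq : 1 ≤ q := Real.one_le_rpow one_le_two hα
  have hpow (k : ℕ) : ((2 ^ k : ℕ) : ℝ) ^ (-α) = (q ^ k)⁻¹ := by
    rw [Nat.cast_pow, Real.rpow_neg (by positivity), Real.rpow_pow_comm zero_le_two, Nat.cast_two]
  have hdyadic : ∀ k, S (2 ^ k) ≤ 2 * q ^ 3 * C * (q ^ k)⁻¹ :=
    apply_two_pow_le_of_sq_le hq hS hanti hone fun k => by
      have hfour : 2 ^ (k + 2) = 4 * 2 ^ k := by ring
      simpa only [hfour, hpow, pow_succ'] using hstep (2 ^ k) Nat.one_le_two_pow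
  have hconst : (2 : ℝ) ^ (5 * α + 1) = 2 * q ^ 5 := by
    rw [Real.rpow_add_one two_ne_zero, mul_comm 5 α, Real.rpow_mul zero_le_two, mul_comm]
    norm_cast
  let k := Nat.log 2 n
  have hn_lt : n < 2 ^ (k + 1) := Nat.lt_pow_succ_log_self one_lt_two n
  have hn_pow : (q ^ (k + 1))⁻¹ ≤ (n : ℝ) ^ (-α) := by
    rw [← hpow]
    exact Real.rpow_le_rpow_of_nonpos (by exact_mod_cast hn) (by exact_mod_cast hn_lt.le)
      (neg_nonpos.2 hα)
  calc S n ≤ S (2 ^ k) := hanti (Nat.pow_log_le_self 2 (by omega))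
    _ ≤ 2 * q ^ 3 * C * (q ^ k)⁻¹ := hdyadic k
    _ = 2 * q ^ 4 * C * (q ^ (k + 1))⁻¹ := by field_simp; ring
    _ ≤ 2 * q ^ 5 * C * (n : ℝ) ^ (-α) := by gcongr; norm_num
    _ = 2 ^ (5 * α + 1) * C * (n : ℝ) ^ (-α) := by rw [hconst]

end Recursion

theorem two_set_greedy_algebraic_decay_general {𝕜 H : Type*} [RCLike 𝕜] [NormedAddCommGroup H]
    [InnerProductSpace 𝕜 H] {F S : Set H} {f : ℕ → H} {C α : ℝ} (hF : Bornology.IsBounded F)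
    (hSF : S ⊆ F) (hf : IsGreedySequence 𝕜 S f) (hα : 0 ≤ α)
    (hd : ∀ n : ℕ, 1 ≤ n → kolmogorovWidth 𝕜 F n ≤ C * (n : ℝ) ^ (-α)) {n : ℕ} (hn : 1 ≤ n) :
    greedyError 𝕜 S f n ≤ 2 ^ (5 * α + 1) * C * (n : ℝ) ^ (-α) := by
  have herr (n : ℕ) : 0 ≤ greedyError 𝕜 S f n := deviation_nonneg _ _
  refine le_two_rpow_mul_rpow_neg_of_sq_le hα herr (greedyError_antitone (hF.subset hSF) f)
    ?_ (fun m hm => ?_) hn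
  · calc greedyError 𝕜 S f 1 ≤ 2 * kolmogorovWidth 𝕜 F 1 := greedyError_one_le hF hSF hf
      _ ≤ 2 * C := by simpa using hd 1 le_rfl
  · calc greedyError 𝕜 S f (4 * m) ^ 2 = greedyError 𝕜 S f (2 * m + 2 * m) ^ 2 := by
          rw [← add_mul]
      _ ≤ 2 * greedyError 𝕜 S f (2 * m) * kolmogorovWidth 𝕜 F m :=
          greedyError_add_two_mul_sq_le hF hSF hf _ (Nat.one_le_iff_ne_zero.1 hm)
      _ ≤ 2 * greedyError 𝕜 S f (2 * m) * (C * (m : ℝ) ^ (-α)) := by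
          gcongr
          · exact mul_nonneg zero_le_two (herr _)
          · exact hd m hm

/-- Two-set greedy algorithm: algebraic decay of the Kolmogorov widths
`d_n(F) ≤ C₀ n^{-α}` implies `σ_n(F̃) ≤ 2^{5α+1} C₀ n^{-α}` for all `n ≥ 1`. -/
theorem two_set_greedy_algebraic_decay
    {H : Type*} [NormedAddCommGroup H] [InnerProductSpace ℝ H]
    (F Ftil : Set H) (hsub : Ftil ⊆ F) (hcomp : IsCompact F)
    (hbound : ∀ f ∈ F, ‖f‖ ≤ 1)
    (f : ℕ → H) (hmem : ∀ n, f n ∈ Ftil)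
    (hgreedy : ∀ n : ℕ,
      Metric.infDist (f n) ((Submodule.span ℝ (f '' Set.Iio n) : Submodule ℝ H) : Set H)
        = ⨆ g : Ftil, Metric.infDist (g : H)
            ((Submodule.span ℝ (f '' Set.Iio n) : Submodule ℝ H) : Set H))
    (C₀ α : ℝ) (hC₀ : 0 < C₀) (hα : 0 < α)
    (hd : ∀ n : ℕ, 1 ≤ n →
      (⨅ Y : {Y : Submodule ℝ H // Module.rank ℝ Y ≤ n},
          ⨆ g : F, Metric.infDist (g : H) ((Y : Submodule ℝ H) : Set H))
        ≤ C₀ * (n : ℝ) ^ (-α)) :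
    ∀ n : ℕ, 1 ≤ n →
      (⨆ g : Ftil, Metric.infDist (g : H)
          ((Submodule.span ℝ (f '' Set.Iio n) : Submodule ℝ H) : Set H))
        ≤ 2 ^ (5 * α + 1) * C₀ * (n : ℝ) ^ (-α) :=
  fun _ => two_set_greedy_algebraic_decay_general hcomp.isBounded hsub ⟨hmem, hgreedy⟩ hα.le hd
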